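/- Let m, p, n, s, t, k be natural numbers with n ≤ p, s ≤ t and k > max(p, t), let a, b ∈ ℂ, and let φ(z) = a·z^p·conj(z)^n + b·z^s·conj(z)^t. Then for every z ∈ ℂ, (T_φ (w ↦ w^k))(z) = a·((p+k+m)!/(p+k+m−n)!)·z^{p+k−n} + b·((s+k+m)!/(s+k+m−t)!)·z^{s+k−t}. -/

import Mathlib

/-!
Expanding the kernel and integrating term by term, the monomial `w ^ A * conj w ^ B` is sent to
`∑ j, m! / (j + m)! * z ^ j * ∫ w ^ A * conj w ^ (B + j) * |w| ^ (2 m) * exp (-|w| ^ 2)`.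
By rotation invariance of area measure only `j = A - B` survives (`integral_monomial_of_ne`), and
there the integral is the Gamma integral `π * (A + m)!` (`integral_monomial_self`).  The interchange
of sum and integral is dominated convergence: `m! / (j + m)! ≤ 1 / j!` bounds the kernel series
termwise by the series of `exp (|z| |w|)`, and `|w| ^ N * exp (|z| |w| - |w| ^ 2)` is integrable.
The theorem is the linear combination of the cases `(A, B) = (p + k, n)` and `(s + k, t)`.
-/

open MeasureTheory Complex ComplexOrder

/-- Weight function: `|z|^{2m} e^{-|z|^2}` as a complex number. -/
noncomputable def fsWt (m : ℕ) (z : ℂ) : ℂ :=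
  ((‖z‖ : ℝ) : ℂ) ^ (2 * m) * ((Real.exp (-‖z‖ ^ 2) : ℝ) : ℂ)

/-- Fock–Sobolev reproducing kernel `K_m(z,w)`. -/
noncomputable def fsKernel (m : ℕ) (z w : ℂ) : ℂ :=
  ∑' j : ℕ, ((m.factorial : ℂ) / ((j + m).factorial : ℂ)) * (z * starRingEnd ℂ w) ^ j

/-- Toeplitz operator with symbol `ψ` acting on `f`, evaluated at `z`. -/
noncomputable def fsToeplitz (m : ℕ) (ψ f : ℂ → ℂ) (z : ℂ) : ℂ :=
  (1 / ((Real.pi : ℂ) * (m.factorial : ℂ))) *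
    ∫ w : ℂ, ψ w * f w * fsKernel m z w * fsWt m w

/-- Fock–Sobolev pairing `⟨g, h⟩`. -/
noncomputable def fsPair (m : ℕ) (g h : ℂ → ℂ) : ℂ :=
  ∫ z : ℂ, g z * starRingEnd ℂ (h z) * fsWt m z

/-- `‖g‖² = ⟨g, g⟩`. -/
noncomputable def fsNormSq (m : ℕ) (g : ℂ → ℂ) : ℂ := fsPair m g g

/-- The diagonal Gaussian moments. -/
lemma integral_monomial_self (m A : ℕ) :
    ∫ w : ℂ, w ^ A * (starRingEnd ℂ w) ^ A * fsWt m w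
      = (Real.pi : ℂ) * ((A + m).factorial : ℂ) := by
  have h := Complex.integral_rpow_mul_exp_neg_rpow (p := 2) (q := ((2 * (A + m) : ℕ) : ℝ))
    (by norm_num) (by have : (0 : ℝ) ≤ ((2 * (A + m) : ℕ) : ℝ) := Nat.cast_nonneg _
                      linarith)
  have hG : (((2 * (A + m) : ℕ) : ℝ) + 2) / 2 = ((A + m : ℕ) : ℝ) + 1 := by
    push_cast; ring
  rw [hG, Real.Gamma_nat_eq_factorial] at h
  have h2 : ∀ w : ℂ, w ^ A * (starRingEnd ℂ w) ^ A * fsWt m w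
      = ((‖w‖ ^ (((2 * (A + m) : ℕ) : ℝ)) * Real.exp (-‖w‖ ^ (2 : ℝ)) : ℝ) : ℂ) := by
    intro w
    rw [← mul_pow, Complex.mul_conj, Complex.normSq_eq_norm_sq, fsWt, Real.rpow_natCast,
      Real.rpow_two]
    push_cast
    ring
  simp_rw [h2]
  rw [integral_complex_ofReal, h]
  push_cast
  ring

/-- The off-diagonal Gaussian moments vanish: the rotation by `π / (A - B)` changes the sign of
the integrand. -/
lemma integral_monomial_of_ne (m A B : ℕ) (h : A ≠ B) :
    ∫ w : ℂ, w ^ A * (starRingEnd ℂ w) ^ B * fsWt m w = 0 := by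
  set θ : ℝ := Real.pi / ((A : ℝ) - B) with hθ
  have hAB : (A : ℂ) - B ≠ 0 := sub_ne_zero.mpr (by exact_mod_cast h)
  have hu : ((Circle.exp θ : Circle) : ℂ) ^ A * (starRingEnd ℂ (Circle.exp θ : ℂ)) ^ B = -1 := by
    rw [Circle.coe_exp, ← Complex.exp_conj, ← Complex.exp_nat_mul, ← Complex.exp_nat_mul,
      ← Complex.exp_add, ← Complex.exp_pi_mul_I]
    congr 1
    rw [map_mul, Complex.conj_ofReal, Complex.conj_I, hθ]
    push_cast
    field_simp
    ring
  have hrot := ((rotation (Circle.exp θ)).measurePreserving.integral_comp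
    (rotation (Circle.exp θ)).toHomeomorph.measurableEmbedding
    (fun w : ℂ => w ^ A * (starRingEnd ℂ w) ^ B * fsWt m w))
  have hneg : ∀ w : ℂ, (rotation (Circle.exp θ) w) ^ A *
      (starRingEnd ℂ (rotation (Circle.exp θ) w)) ^ B * fsWt m (rotation (Circle.exp θ) w)
      = -(w ^ A * (starRingEnd ℂ w) ^ B * fsWt m w) := by
    intro w
    have hw : fsWt m (rotation (Circle.exp θ) w) = fsWt m w := by
      simp only [fsWt, LinearIsometryEquiv.norm_map]
    rw [hw, rotation_apply, map_mul, mul_pow, mul_pow]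
    linear_combination (w ^ A * (starRingEnd ℂ w) ^ B * fsWt m w) * hu
  simp_rw [hneg] at hrot
  rw [integral_neg] at hrot
  exact self_eq_neg.mp hrot.symm

lemma integrable_pow_mul_exp (N : ℕ) (c : ℝ) :
    Integrable (fun w : ℂ => ‖w‖ ^ N * (Real.exp (c * ‖w‖) * Real.exp (-‖w‖ ^ 2))) := by
  have h0 : (0 : ℝ) ≤ N := Nat.cast_nonneg _
  have hq : Integrable (fun w : ℂ => ‖w‖ ^ (N : ℝ) * Real.exp (-(1 / 2) * ‖w‖ ^ (2 : ℝ))) := by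
    apply Integrable.of_integral_ne_zero
    rw [Complex.integral_rpow_mul_exp_neg_mul_rpow (by norm_num) (by linarith) (by norm_num)]
    have := Real.Gamma_pos_of_pos (s := ((N : ℝ) + 2) / 2) (by positivity)
    positivity
  refine (hq.const_mul (Real.exp (c ^ 2 / 2))).mono'
    (Continuous.aestronglyMeasurable (by fun_prop)) (Filter.Eventually.of_forall fun w => ?_)
  rw [Real.norm_of_nonneg (by positivity), Real.rpow_natCast, Real.rpow_two,
    mul_left_comm (Real.exp (c ^ 2 / 2)),
    ← Real.exp_add, ← Real.exp_add]
  refine mul_le_mul_of_nonneg_left (Real.exp_le_exp.mpr ?_) (by positivity)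
  -- AM-GM: `c * |w| ≤ c ^ 2 / 2 + |w| ^ 2 / 2`, leaving half of the Gaussian decay.
  nlinarith [sq_nonneg (c - ‖w‖)]

lemma norm_fsWt (m : ℕ) (w : ℂ) : ‖fsWt m w‖ = ‖w‖ ^ (2 * m) * Real.exp (-‖w‖ ^ 2) := by
  rw [fsWt, norm_mul, norm_pow, Complex.norm_real, Complex.norm_real, norm_norm,
    Real.norm_of_nonneg (Real.exp_pos _).le]

lemma norm_kernel_term_le (m j : ℕ) (z w : ℂ) :
    ‖((m.factorial : ℂ) / ((j + m).factorial : ℂ)) * (z * starRingEnd ℂ w) ^ j‖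
      ≤ (‖z‖ * ‖w‖) ^ j / (j.factorial : ℝ) := by
  rw [norm_mul, norm_div, Complex.norm_natCast, Complex.norm_natCast, norm_pow, norm_mul,
    RCLike.norm_conj, div_eq_inv_mul _ (j.factorial : ℝ)]
  gcongr
  rw [div_le_iff₀ (by positivity), inv_mul_eq_div, le_div_iff₀ (by positivity)]
  have := Nat.le_of_dvd (Nat.factorial_pos _) (Nat.factorial_mul_factorial_dvd_factorial_add j m)
  rw [mul_comm]
  exact_mod_cast this

lemma hasSum_fsKernel (m : ℕ) (z w : ℂ) :
    HasSum (fun j : ℕ => ((m.factorial : ℂ) / ((j + m).factorial : ℂ)) *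
      (z * starRingEnd ℂ w) ^ j) (fsKernel m z w) :=
  (Summable.of_norm_bounded (Real.summable_pow_div_factorial _)
    fun j => norm_kernel_term_le m j z w).hasSum

lemma continuous_fsWt (m : ℕ) : Continuous (fsWt m) := by
  unfold fsWt
  fun_prop

/-- The series majorizing the expanded integrand sums to a multiple of `exp (|z| |w|)`. -/
lemma hasSum_bound (m A B : ℕ) (z w : ℂ) :
    HasSum (fun j : ℕ => ‖w‖ ^ (A + B + 2 * m) *
        ((‖z‖ * ‖w‖) ^ j / (j.factorial : ℝ) * Real.exp (-‖w‖ ^ 2)))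
      (‖w‖ ^ (A + B + 2 * m) * (Real.exp (‖z‖ * ‖w‖) * Real.exp (-‖w‖ ^ 2))) := by
  have h := NormedSpace.expSeries_div_hasSum_exp (‖z‖ * ‖w‖)
  rw [← Real.exp_eq_exp_ℝ] at h
  exact (h.mul_right _).mul_left _

lemma norm_term_le (m A B j : ℕ) (z w : ℂ) :
    ‖w ^ A * (starRingEnd ℂ w) ^ B * (((m.factorial : ℂ) / ((j + m).factorial : ℂ)) *
      (z * starRingEnd ℂ w) ^ j) * fsWt m w‖ ≤ ‖w‖ ^ (A + B + 2 * m) *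
        ((‖z‖ * ‖w‖) ^ j / (j.factorial : ℝ) * Real.exp (-‖w‖ ^ 2)) := by
  rw [norm_mul, norm_mul, norm_fsWt, norm_mul, norm_pow, norm_pow, RCLike.norm_conj]
  calc _ ≤ ‖w‖ ^ A * ‖w‖ ^ B * ((‖z‖ * ‖w‖) ^ j / (j.factorial : ℝ)) *
        (‖w‖ ^ (2 * m) * Real.exp (-‖w‖ ^ 2)) := by
        gcongr
        exact norm_kernel_term_le m j z w
    _ = _ := by ring

lemma hasSum_integrand (m A B : ℕ) (z w : ℂ) :
    HasSum (fun j : ℕ => w ^ A * (starRingEnd ℂ w) ^ B *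
      (((m.factorial : ℂ) / ((j + m).factorial : ℂ)) * (z * starRingEnd ℂ w) ^ j) * fsWt m w)
      (w ^ A * (starRingEnd ℂ w) ^ B * fsKernel m z w * fsWt m w) :=
  ((hasSum_fsKernel m z w).mul_left _).mul_right _

lemma continuous_term (m A B j : ℕ) (z : ℂ) :
    Continuous (fun w : ℂ => w ^ A * (starRingEnd ℂ w) ^ B *
      (((m.factorial : ℂ) / ((j + m).factorial : ℂ)) * (z * starRingEnd ℂ w) ^ j) * fsWt m w) := by
  have := continuous_fsWt m
  have := Complex.continuous_conj
  fun_prop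

lemma integrable_monomial_kernel (m A B : ℕ) (z : ℂ) :
    Integrable (fun w : ℂ => w ^ A * (starRingEnd ℂ w) ^ B * fsKernel m z w * fsWt m w) := by
  refine (integrable_pow_mul_exp (A + B + 2 * m) ‖z‖).mono' ?_
    (Filter.Eventually.of_forall fun w => ?_)
  · exact aestronglyMeasurable_of_tendsto_ae Filter.atTop
      (fun N => (continuous_finsetSum (Finset.range N)
        fun j _ => continuous_term m A B j z).aestronglyMeasurable)
      (Filter.Eventually.of_forall fun w => (hasSum_integrand m A B z w).tendsto_sum_nat)
  · rw [← (hasSum_integrand m A B z w).tsum_eq]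
    exact tsum_of_norm_bounded (hasSum_bound m A B z w) fun j => norm_term_le m A B j z w

/-- The Toeplitz integral of a single monomial, up to the normalizing factor `1 / (π m!)`. -/
lemma integral_monomial_kernel (m A B : ℕ) (hBA : B ≤ A) (z : ℂ) :
    ∫ w : ℂ, w ^ A * (starRingEnd ℂ w) ^ B * fsKernel m z w * fsWt m w
      = (Real.pi : ℂ) * (m.factorial : ℂ) *
        (((A + m).factorial : ℂ) / ((A + m - B).factorial : ℂ) * z ^ (A - B)) := by
  have h := hasSum_integral_of_dominated_convergence (μ := volume)
    (fun (j : ℕ) (w : ℂ) => ‖w‖ ^ (A + B + 2 * m) *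
        ((‖z‖ * ‖w‖) ^ j / (j.factorial : ℝ) * Real.exp (-‖w‖ ^ 2)))
    (fun j => (continuous_term m A B j z).aestronglyMeasurable)
    (fun j => Filter.Eventually.of_forall fun w => norm_term_le m A B j z w)
    (Filter.Eventually.of_forall fun w => (hasSum_bound m A B z w).summable)
    (by
      simp_rw [fun w : ℂ => (hasSum_bound m A B z w).tsum_eq]
      exact integrable_pow_mul_exp _ _)
    (Filter.Eventually.of_forall fun w => hasSum_integrand m A B z w)
  have hterm : ∀ j : ℕ, ∫ w : ℂ, w ^ A * (starRingEnd ℂ w) ^ B *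
      (((m.factorial : ℂ) / ((j + m).factorial : ℂ)) * (z * starRingEnd ℂ w) ^ j) * fsWt m w
      = ((m.factorial : ℂ) / ((j + m).factorial : ℂ)) * z ^ j *
        ∫ w : ℂ, w ^ A * (starRingEnd ℂ w) ^ (B + j) * fsWt m w := by
    intro j
    rw [← integral_const_mul]
    congr 1 with w
    ring
  simp_rw [hterm] at h
  rw [h.unique (hasSum_single (A - B) fun j hj => by
    rw [integral_monomial_of_ne m A (B + j) (by omega), mul_zero]),
    Nat.add_sub_cancel' hBA, integral_monomial_self, show A - B + m = A + m - B by omega]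
  ring

theorem stmt2 (m p n s t k : ℕ) (hn : n ≤ p) (hs : s ≤ t) (hk : k > max p t)
    (a b : ℂ) (φ : ℂ → ℂ) (hφ : φ = fun z => a * z ^ p * (starRingEnd ℂ z) ^ n + b * z ^ s * (starRingEnd ℂ z) ^ t) :
    ∀ z : ℂ, fsToeplitz m φ (fun w => w ^ k) z =
      a * (((p + k + m).factorial : ℂ) / ((p + k + m - n).factorial : ℂ)) * z ^ (p + k - n)
      + b * (((s + k + m).factorial : ℂ) / ((s + k + m - t).factorial : ℂ)) * z ^ (s + k - t) := by
  intro z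
  have hkt : t < k := lt_of_le_of_lt (le_max_right p t) hk
  have hsplit : ∀ w : ℂ, φ w * w ^ k * fsKernel m z w * fsWt m w
      = a * (w ^ (p + k) * (starRingEnd ℂ w) ^ n * fsKernel m z w * fsWt m w)
        + b * (w ^ (s + k) * (starRingEnd ℂ w) ^ t * fsKernel m z w * fsWt m w) := by
    intro w
    rw [hφ]
    ring
  have hpi : (Real.pi : ℂ) ≠ 0 := by exact_mod_cast Real.pi_ne_zero
  have hm : (m.factorial : ℂ) ≠ 0 := by exact_mod_cast m.factorial_ne_zero
  unfold fsToeplitz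
  simp_rw [hsplit]
  rw [integral_add ((integrable_monomial_kernel m _ _ z).const_mul a)
      ((integrable_monomial_kernel m _ _ z).const_mul b),
    integral_const_mul, integral_const_mul, integral_monomial_kernel m _ _ (by omega),
    integral_monomial_kernel m _ _ (by omega)]
  generalize (((p + k + m).factorial : ℂ) / ((p + k + m - n).factorial : ℂ)) = x
  generalize (((s + k + m).factorial : ℂ) / ((s + k + m - t).factorial : ℂ)) = y
  field_simp
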